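/- Tangent variation along a curvature-bounded curve: Let γ : ℝ → EuclideanSpace ℝ (Fin N), let a ≤ b and R > 0, and suppose γ is twice differentiable on [a, b] with ‖γ′(s)‖ = 1 and ‖γ″(s)‖ ≤ 1/R for all s ∈ [a, b] (γ is parameterized by arc length with curvature at most 1/R). Then the angle between the tangent vectors at the endpoints satisfies ∠(γ′(a), γ′(b)) ≤ (b − a)/R, where ∠(u, v) = arccos(⟪u, v⟫/(‖u‖·‖v‖)). -/

import Mathlib

/-!
The unit tangent `γ'` moves on the unit sphere with speed at most `1/R`, so the angular distance
from `γ' a` to `γ' s` grows at rate at most `1/R`. Since `arccos` is not differentiable at `±1`,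
this function of `s` need not be differentiable; its right upper derivative is estimated instead.
By the triangle inequality for angles, the increment of the angle over `[x, z]` is at most
`θ = ∠(γ' x, γ' z)`. The chord satisfies `2 sin (θ / 2) = ‖γ' x - γ' z‖ ≤ (z - x) / R`
(`norm_sub_eq_two_mul_sin_half_angle` and the mean value inequality), and
`θ cos (θ / 2) ≤ 2 sin (θ / 2)` with `cos (θ / 2) → 1` as `z → x`, so the right upper derivative is
at most `1/R`. The one-sided comparison principle
`image_le_of_liminf_slope_right_le_deriv_boundary` then bounds the angle by `(s - a) / R`.
-/

open InnerProductGeometry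

/-- The chord between two unit vectors at angle `θ` has length `2 sin (θ / 2)`. -/
lemma norm_sub_eq_two_mul_sin_half_angle {V : Type*} [NormedAddCommGroup V]
    [InnerProductSpace ℝ V] {u v : V} (hu : ‖u‖ = 1) (hv : ‖v‖ = 1) :
    ‖u - v‖ = 2 * Real.sin (angle u v / 2) := by
  have h0 := angle_nonneg u v
  have hpi := angle_le_pi u v
  have hs : 0 ≤ Real.sin (angle u v / 2) :=
    Real.sin_nonneg_of_nonneg_of_le_pi (by linarith) (by linarith)
  have hsq := norm_sub_sq_real u v
  have hcos : Real.cos (angle u v) = inner ℝ u v := by simp [cos_angle, hu, hv]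
  have hdouble : Real.cos (angle u v) = 1 - 2 * Real.sin (angle u v / 2) ^ 2 := by
    have h1 := Real.cos_two_mul (angle u v / 2)
    have h2 := Real.sin_sq_add_cos_sq (angle u v / 2)
    rw [mul_div_cancel₀ _ (two_ne_zero)] at h1
    linarith
  rw [hu, hv, ← hcos, hdouble] at hsq
  refine (sq_eq_sq₀ (norm_nonneg _) (by positivity)).1 ?_
  rw [hsq]
  ring

/-- The chord controls the angle up to the factor `cos (θ / 2)`, which tends to `1` as the two
unit vectors approach each other. -/
lemma angle_mul_cos_half_angle_le_norm_sub {V : Type*} [NormedAddCommGroup V]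
    [InnerProductSpace ℝ V] {u v : V} (hu : ‖u‖ = 1) (hv : ‖v‖ = 1) :
    angle u v * Real.cos (angle u v / 2) ≤ ‖u - v‖ := by
  rw [norm_sub_eq_two_mul_sin_half_angle hu hv]
  have h0 := angle_nonneg u v
  rcases (angle_le_pi u v).eq_or_lt with h | h
  · simp [h]
  · have hc : 0 < Real.cos (angle u v / 2) :=
      Real.cos_pos_of_mem_Ioo ⟨by linarith [Real.pi_pos], by linarith⟩
    have ht := Real.le_tan (x := angle u v / 2) (by linarith) (by linarith)
    rw [Real.tan_eq_sin_div_cos, le_div_iff₀ hc] at ht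
    linarith

/-- **Tangent variation along a curvature-bounded curve.** If `γ` is parameterized by arc
length on `[a, b]` with curvature at most `1/R`, then the angle between the unit tangent
vectors at the endpoints is at most `(b - a)/R`. -/
theorem tangent_variation_along_curve {N : ℕ}
    (γ γ' γ'' : ℝ → EuclideanSpace ℝ (Fin N))
    (a b R : ℝ) (hab : a ≤ b) (hR : 0 < R)
    (hd1 : ∀ s ∈ Set.Icc a b, HasDerivWithinAt γ (γ' s) (Set.Icc a b) s)
    (hd2 : ∀ s ∈ Set.Icc a b, HasDerivWithinAt γ' (γ'' s) (Set.Icc a b) s)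
    (hunit : ∀ s ∈ Set.Icc a b, ‖γ' s‖ = 1)
    (hcurv : ∀ s ∈ Set.Icc a b, ‖γ'' s‖ ≤ 1 / R) :
    InnerProductGeometry.angle (γ' a) (γ' b) ≤ (b - a) / R := by
  have hne : ∀ s ∈ Set.Icc a b, γ' s ≠ 0 := fun s hs h => by
    simpa [h] using hunit s hs
  have ha : a ∈ Set.Icc a b := Set.left_mem_Icc.2 hab
  have hcont : ∀ x ∈ Set.Icc a b,
      ContinuousOn (fun s => angle (γ' x) (γ' s)) (Set.Icc a b) := fun x hx s hs =>
    (continuousAt_angle (x := (γ' x, γ' s)) (hne x hx) (hne s hs)).comp_continuousWithinAt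
      (f := fun s => (γ' x, γ' s))
      (continuousWithinAt_const.prodMk (hd2 s hs).continuousWithinAt)
  refine image_le_of_liminf_slope_right_le_deriv_boundary
    (f := fun s => angle (γ' a) (γ' s)) (B := fun s => (s - a) / R) (B' := fun _ => 1 / R)
    (hcont a ha) ?_ (by fun_prop)
    (fun x _ => (((hasDerivAt_id x).sub_const a).div_const R).hasDerivWithinAt) ?_
    (Set.right_mem_Icc.2 hab)
  · simp [angle_self (hne a ha)]
  intro x hx r hr
  have hxI : x ∈ Set.Icc a b := Set.Ico_subset_Icc_self hx
  have hr0 : 0 < r := lt_trans (by positivity) hr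
  have hmem : Set.Icc a b ∈ nhdsWithin x (Set.Ioi x) :=
    Filter.mem_of_superset (Ioc_mem_nhdsGT hx.2)
      fun z hz => ⟨hx.1.trans hz.1.le, hz.2⟩
  have hlim : Filter.Tendsto (fun z => r * Real.cos (angle (γ' x) (γ' z) / 2))
      (nhdsWithin x (Set.Ioi x)) (nhds r) := by
    have h1 : Filter.Tendsto (fun z => angle (γ' x) (γ' z))
        (nhdsWithin x (Set.Ioi x)) (nhds 0) := by
      have := (hcont x hxI x hxI).tendsto
      rw [angle_self (hne x hxI)] at this
      exact this.mono_left (nhdsWithin_le_of_mem hmem)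
    have h2 : Continuous fun t : ℝ => r * Real.cos (t / 2) := by fun_prop
    simpa [Function.comp_def] using (h2.tendsto 0).comp h1
  -- Since `r cos (θ / 2) → r > 1 / R`, the slope bound holds for all `z > x` close to `x`.
  refine Filter.Eventually.frequently ?_
  filter_upwards [hmem, self_mem_nhdsWithin, hlim.eventually (lt_mem_nhds hr)]
    with z hz hxz hcos
  have hxz' : 0 < z - x := sub_pos.2 hxz
  have hchord : ‖γ' x - γ' z‖ ≤ 1 / R * (z - x) := by
    have := (convex_Icc a b).norm_image_sub_le_of_norm_hasDerivWithin_le hd2 hcurv hxI hz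
    rwa [norm_sub_rev, Real.norm_of_nonneg hxz'.le] at this
  have hang := angle_mul_cos_half_angle_le_norm_sub (hunit x hxI) (hunit z hz)
  have hc : 0 < Real.cos (angle (γ' x) (γ' z) / 2) :=
    pos_of_mul_pos_right (lt_trans (by positivity) hcos) hr0.le
  have hsmall : angle (γ' x) (γ' z) < r * (z - x) := by
    refine lt_of_mul_lt_mul_right ?_ hc.le
    calc angle (γ' x) (γ' z) * Real.cos (angle (γ' x) (γ' z) / 2)
        ≤ 1 / R * (z - x) := hang.trans hchord
      _ < r * Real.cos (angle (γ' x) (γ' z) / 2) * (z - x) :=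
          mul_lt_mul_of_pos_right hcos hxz'
      _ = r * (z - x) * Real.cos (angle (γ' x) (γ' z) / 2) := by ring
  have htri := angle_le_angle_add_angle (γ' a) (γ' x) (γ' z)
  rw [slope_def_field, div_lt_iff₀ hxz']
  linarith
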